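/- The Egli-Milner hom makes the V-subsets of a V-category into a V-category: for a V-category A over a commutative quantale V, define for V-subsets φ, ψ of A the value P A(φ,ψ) = (⋀_a [φ a, ⋁_{a'} ψ a' ⊗ A(a,a')]) ⊗ (⋀_{a'} [ψ a', ⋁_a φ a ⊗ A(a,a')]). Then I ≤ P A(φ,φ) for every V-subset φ, and P A(φ,ψ) ⊗ P A(ψ,χ) ≤ P A(φ,χ) for all V-subsets φ, ψ, χ. -/

import Mathlib

universe u v w

/-- A category enriched in a commutative quantale `V`:
objects together with `V`-valued homs satisfying the identity and composition axioms. -/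
structure VCategory (V : Type u) [CompleteLattice V] [CommMonoid V] where
  Obj : Type v
  hom : Obj → Obj → V
  one_le_hom : ∀ a, (1 : V) ≤ hom a a
  comp_le : ∀ a b c, hom b c * hom a b ≤ hom a c

/-- A `V`-functor is an object assignment which is (hom-)expanding. -/
def IsVFunctor {V : Type u} [CompleteLattice V] [CommMonoid V]
    (A : VCategory.{u, v} V) (B : VCategory.{u, w} V) (f : A.Obj → B.Obj) : Prop :=
  ∀ a a', A.hom a a' ≤ B.hom (f a) (f a')

/-- A module `R : A ⇸ B`. -/
def IsModule {V : Type u} [CompleteLattice V] [CommMonoid V]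
    (A : VCategory.{u, v} V) (B : VCategory.{u, w} V) (R : B.Obj → A.Obj → V) : Prop :=
  ∀ (a a' : A.Obj) (b b' : B.Obj), B.hom b' b * R b a * A.hom a a' ≤ R b' a'

/-- The internal hom of the quantale: `[x,y] = ⋁ {z | x ⊗ z ≤ y}`. -/
def ihom {V : Type u} [CompleteLattice V] [CommMonoid V] (x y : V) : V :=
  sSup {z | x * z ≤ y}

/-- A presheaf on `A`. -/
def IsPresheaf {V : Type u} [CompleteLattice V] [CommMonoid V]
    (A : VCategory.{u, v} V) (F : A.Obj → V) : Prop :=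
  ∀ a a', F a * A.hom a' a ≤ F a'

/-- The Egli-Milner `V`-valued hom on `V`-subsets of a `V`-category `A`. -/
def PHom {V : Type u} [CompleteLattice V] [CommMonoid V]
    (A : VCategory.{u, v} V) (φ ψ : A.Obj → V) : V :=
  (⨅ a, ihom (φ a) (⨆ a', ψ a' * A.hom a a')) *
    (⨅ a', ihom (ψ a') (⨆ a, φ a * A.hom a a'))

/-!
The Egli-Milner hom is the Hoare lifting of `A.hom` from `φ` to `ψ`, times the Hoare lifting of
the reversed relation from `ψ` to `φ`. Hoare lifting preserves reflexivity and is lax functorial: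
the pointwise bounds `φ a * z ≤ ⨆ b, ψ b * R a b` that characterize `z ≤ hoareLift R φ ψ` can be
chained along the two relations. By commutativity of `V`, reversing the transitive relation
`A.hom` gives a transitive relation again, so both factors compose separately.
-/

theorem isQuantale_of_mul_sSup {V : Type*} [CompleteLattice V] [CommSemigroup V]
    (hV : ∀ (x : V) (s : Set V), x * sSup s = ⨆ y ∈ s, x * y) : IsQuantale V where
  mul_sSup_distrib := hV
  sSup_mul_distrib s y := by simpa only [mul_comm] using hV y s

theorem le_ihom_iff {V : Type*} [CompleteLattice V] [CommMonoid V] [IsQuantale V] {x y z : V} :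
    z ≤ ihom x y ↔ x * z ≤ y :=
  Quantale.rightMulResiduation_le_iff_mul_le

section HoareLift

variable {V X Y Z : Type*} [CompleteLattice V] [CommMonoid V]

/-- The Hoare (lower) lifting of a `V`-valued relation `R` to `V`-subsets: the degree to which
every element of `φ` is `R`-related to some element of `ψ`. It is defined for arbitrary relations,
so that it applies to the hom of a `V`-category and to its reverse alike. -/
def hoareLift (R : X → Y → V) (φ : X → V) (ψ : Y → V) : V :=
  ⨅ a, ihom (φ a) (⨆ b, ψ b * R a b)

theorem pHom_eq_hoareLift_mul_hoareLift (A : VCategory V) (φ ψ : A.Obj → V) :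
    PHom A φ ψ = hoareLift A.hom φ ψ * hoareLift (Function.swap A.hom) ψ φ :=
  rfl

variable [IsQuantale V]

theorem le_hoareLift_iff {R : X → Y → V} {φ : X → V} {ψ : Y → V} {z : V} :
    z ≤ hoareLift R φ ψ ↔ ∀ a, φ a * z ≤ ⨆ b, ψ b * R a b := by
  simp only [hoareLift, le_iInf_iff, le_ihom_iff]

theorem mul_hoareLift_le (R : X → Y → V) (φ : X → V) (ψ : Y → V) (a : X) :
    φ a * hoareLift R φ ψ ≤ ⨆ b, ψ b * R a b :=
  le_hoareLift_iff.1 le_rfl a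

theorem one_le_hoareLift_self {R : X → X → V} (hR : ∀ a, 1 ≤ R a a) (φ : X → V) :
    1 ≤ hoareLift R φ φ :=
  le_hoareLift_iff.2 fun a => le_iSup_of_le a (mul_le_mul_right (hR a) (φ a))

theorem hoareLift_mul_hoareLift_le {R : X → Y → V} {S : Y → Z → V} {T : X → Z → V}
    (hRST : ∀ a b c, R a b * S b c ≤ T a c) (φ : X → V) (ψ : Y → V) (χ : Z → V) :
    hoareLift R φ ψ * hoareLift S ψ χ ≤ hoareLift T φ χ := by
  refine le_hoareLift_iff.2 fun a => ?_
  calc φ a * (hoareLift R φ ψ * hoareLift S ψ χ)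
      = φ a * hoareLift R φ ψ * hoareLift S ψ χ := (mul_assoc _ _ _).symm
    _ ≤ (⨆ b, ψ b * R a b) * hoareLift S ψ χ := by grw [mul_hoareLift_le]
    _ = ⨆ b, ψ b * hoareLift S ψ χ * R a b := by
      simp only [Quantale.iSup_mul_distrib, mul_right_comm]
    _ ≤ ⨆ b, (⨆ c, χ c * S b c) * R a b := by
      gcongr with b
      exact mul_hoareLift_le S ψ χ b
    _ = ⨆ b, ⨆ c, χ c * (R a b * S b c) := by
      simp only [Quantale.iSup_mul_distrib, mul_assoc, mul_comm (R a _)]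
    _ ≤ ⨆ c, χ c * T a c := by
      refine iSup_le fun b => ?_
      gcongr with c
      exact hRST a b c

end HoareLift

/-- The Egli-Milner hom makes the `V`-subsets of a `V`-category into a `V`-category. -/
theorem egliMilner_vcategory {V : Type u} [CompleteLattice V] [CommMonoid V]
    (hV : ∀ (x : V) (s : Set V), x * sSup s = ⨆ y ∈ s, x * y)
    (A : VCategory.{u, v} V) :
    (∀ φ : A.Obj → V, (1 : V) ≤ PHom A φ φ) ∧
    (∀ φ ψ χ : A.Obj → V, PHom A φ ψ * PHom A ψ χ ≤ PHom A φ χ) := by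
  have : IsQuantale V := isQuantale_of_mul_sSup hV
  simp only [pHom_eq_hoareLift_mul_hoareLift]
  refine ⟨fun φ => ?_, fun φ ψ χ => ?_⟩
  · exact one_le_mul (one_le_hoareLift_self A.one_le_hom φ)
      (one_le_hoareLift_self (R := Function.swap A.hom) A.one_le_hom φ)
  · have hom_trans (a b c : A.Obj) : A.hom a b * A.hom b c ≤ A.hom a c :=
      (mul_comm _ _).trans_le (A.comp_le a b c)
    have lower : hoareLift A.hom φ ψ * hoareLift A.hom ψ χ ≤ hoareLift A.hom φ χ :=
      hoareLift_mul_hoareLift_le hom_trans φ ψ χ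
    have upper : hoareLift (Function.swap A.hom) χ ψ * hoareLift (Function.swap A.hom) ψ φ ≤
        hoareLift (Function.swap A.hom) χ φ :=
      hoareLift_mul_hoareLift_le (fun a b c => A.comp_le c b a) χ ψ φ
    rw [mul_mul_mul_comm, mul_comm (hoareLift (Function.swap A.hom) ψ φ)]
    exact mul_le_mul' lower upper
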